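/- (Lemma 2(a)) Under the augmented push-sum dynamics with the ergodicity hypothesis, for every player i ∈ {1,…,n} and every k ≥ 0, ‖z_i(k+1) − x̄(k)‖ ≤ (2B'/(ηλ)) · ( λ^k · n·M + ∑_{t=0}^{k} λ^{k−t} Δ(t) ), where M := max_{1≤i≤n} sup_{x ∈ X_i} ‖x‖. -/

import Mathlib

open Filter Topology

/-- Backward product `Φ(k,t) = A(k) A(k−1) ⋯ A(k−t)`. -/
noncomputable def backProd {N : ℕ} (A : ℕ → Matrix (Fin N) (Fin N) ℝ) (k t : ℕ) :
    Matrix (Fin N) (Fin N) ℝ :=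
  ((List.range (t + 1)).map fun s => A (k - s)).prod

/-!
Since the columns of `A` sum to one, pulling the recursion for `v` back one step at a time turns the
deviation `(A(k) v(k))_i - φ_i ∑ v(k)` into `∑_m (Φ(k,k)_{im} - φ_i) v_m(0)` plus the terms
`∑_m (Φ(k,k-1-t)_{im} - φ_i) D_m(t)` for the players' moves `D(t)`, so ergodicity makes it
geometrically small; the same holds for `y`, without moves. By conservation of mass,
`∑ v(k) = n x̄(k)` and `∑ y(k) = n`. Hence the numerator and the denominator of `z_i(k+1)` are close
to `φ_i n x̄(k)` and `φ_i n`, and the lower bound on the denominator transfers this to the ratio.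
-/

section ColumnStochastic

variable {ι κ R E : Type*} [Fintype ι] [Fintype κ]

theorem sum_sum_smul_of_column_sums_eq_one [Semiring R] [AddCommMonoid E] [Module R E]
    {P : Matrix ι κ R} (hP : ∀ j, ∑ i, P i j = 1) (u : κ → E) :
    ∑ i, ∑ j, P i j • u j = ∑ j, u j := by
  rw [Finset.sum_comm]
  simp only [← Finset.sum_smul, hP, one_smul]

theorem sum_sub_smul_sum_smul_of_column_sums_eq_one [Ring R] [AddCommGroup E] [Module R E]
    {P : Matrix ι κ R} (hP : ∀ j, ∑ i, P i j = 1) (a : ι → R) (c : R) (u : κ → E) :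
    ∑ i, (a i - c) • ∑ j, P i j • u j = ∑ j, (Matrix.vecMul a P j - c) • u j := by
  have hrow : ∑ i, a i • ∑ j, P i j • u j = ∑ j, Matrix.vecMul a P j • u j := by
    simp only [Finset.smul_sum, smul_smul]
    rw [Finset.sum_comm]
    simp only [← Finset.sum_smul, Matrix.vecMul, dotProduct]
  simp only [sub_smul, Finset.sum_sub_distrib, ← Finset.smul_sum, hrow,
    sum_sum_smul_of_column_sums_eq_one hP]

end ColumnStochastic

theorem norm_sum_smul_le_mul_sum_norm {ι 𝕜 E : Type*} [Fintype ι] [SeminormedRing 𝕜]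
    [SeminormedAddCommGroup E] [Module 𝕜 E] [IsBoundedSMul 𝕜 E] {a : ι → 𝕜} {ε : ℝ}
    (ha : ∀ i, ‖a i‖ ≤ ε) (u : ι → E) : ‖∑ i, a i • u i‖ ≤ ε * ∑ i, ‖u i‖ := by
  rw [Finset.mul_sum]
  exact norm_sum_le_of_le _ fun i _ =>
    (norm_smul_le _ _).trans (mul_le_mul_of_nonneg_right (ha i) (norm_nonneg _))

section BackProd

variable {N : ℕ} (A : ℕ → Matrix (Fin N) (Fin N) ℝ)

theorem backProd_zero (k : ℕ) : backProd A k 0 = A k := by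
  simp [backProd]

theorem backProd_succ (k t : ℕ) : backProd A k (t + 1) = backProd A k t * A (k - (t + 1)) := by
  simp [backProd, List.range_succ (n := t + 1)]

theorem backProd_sub_eq_mul {k s : ℕ} (hs : s < k) :
    backProd A k (k - s) = backProd A k (k - 1 - s) * A s := by
  have hstep : k - s = k - 1 - s + 1 := by lia
  have hfactor : k - (k - 1 - s + 1) = s := by lia
  rw [hstep, backProd_succ, hfactor]

end BackProd

/-- The recursion `v(k+1) = A(k) v(k) + D(k)`: mixing along `A` with an input `D(k)` injected after
the `k`-th step. The push-sum numerators have the players' moves as input, and the push-sum weights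
have input `0`. -/
def IsPerturbedMixing {ι E : Type*} [Fintype ι] [AddCommMonoid E] [Module ℝ E]
    (A : ℕ → Matrix ι ι ℝ) (v D : ℕ → ι → E) : Prop :=
  ∀ k i, v (k + 1) i = ∑ j, A k i j • v k j + D k i

namespace IsPerturbedMixing

theorem sum_eq {ι E : Type*} [Fintype ι] [AddCommGroup E] [Module ℝ E] {A : ℕ → Matrix ι ι ℝ}
    {v D : ℕ → ι → E} (hv : IsPerturbedMixing A v D) (hA : ∀ k j, ∑ i, A k i j = 1) {S : ℕ → E}
    (hS₀ : ∑ i, v 0 i = S 0) (hS : ∀ k, ∑ i, D k i = S (k + 1) - S k) (k : ℕ) :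
    ∑ i, v k i = S k := by
  induction k with
  | zero => exact hS₀
  | succ k ih =>
    simp only [hv k, Finset.sum_add_distrib, sum_sum_smul_of_column_sums_eq_one (hA k), ih, hS,
      add_sub_cancel]

variable {N : ℕ} {A : ℕ → Matrix (Fin N) (Fin N) ℝ}

theorem sum_smul_sub_smul_sum_eq {E : Type*} [AddCommGroup E] [Module ℝ E] {v D : ℕ → Fin N → E}
    (hv : IsPerturbedMixing A v D) (hA : ∀ k j, ∑ i, A k i j = 1) (i : Fin N) (c : ℝ) {s k : ℕ}
    (hs : s ≤ k) :
    ∑ m, A k i m • v k m - c • ∑ m, v k m =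
      ∑ m, (backProd A k (k - s) i m - c) • v s m +
        ∑ t ∈ Finset.Ico s k, ∑ m, (backProd A k (k - 1 - t) i m - c) • D t m := by
  induction hs using Nat.decreasingInduction with
  | self => simp [backProd_zero, sub_smul, Finset.smul_sum]
  | of_succ s hs ih =>
    have hpull : ∑ m, (backProd A k (k - (s + 1)) i m - c) • v (s + 1) m =
        ∑ m, (backProd A k (k - s) i m - c) • v s m +
          ∑ m, (backProd A k (k - 1 - s) i m - c) • D s m := by
      rw [show k - (s + 1) = k - 1 - s by lia]
      simp only [hv s, smul_add, Finset.sum_add_distrib,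
        sum_sub_smul_sum_smul_of_column_sums_eq_one (hA s)]
      rw [backProd_sub_eq_mul A hs, Matrix.mul_apply_eq_vecMul]
    rw [ih, hpull, Finset.sum_eq_sum_Ico_succ_bot hs, add_assoc]

theorem norm_sum_smul_sub_smul_sum_le {E : Type*} [SeminormedAddCommGroup E] [NormedSpace ℝ E]
    {v D : ℕ → Fin N → E} (hv : IsPerturbedMixing A v D) (hA : ∀ k j, ∑ i, A k i j = 1)
    {i : Fin N} {k : ℕ} {c B r : ℝ}
    (herg : ∀ t ≤ k, ∀ j, |backProd A k t i j - c| ≤ B * r ^ t) :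
    ‖∑ m, A k i m • v k m - c • ∑ m, v k m‖ ≤
      B * (r ^ k * ∑ m, ‖v 0 m‖ + ∑ t ∈ Finset.range k, r ^ (k - 1 - t) * ∑ m, ‖D t m‖) := by
  have hdecay (t : ℕ) (ht : t ≤ k) (u : Fin N → E) :
      ‖∑ m, (backProd A k t i m - c) • u m‖ ≤ B * (r ^ t * ∑ m, ‖u m‖) :=
    (norm_sum_smul_le_mul_sum_norm (herg t ht) u).trans_eq (mul_assoc _ _ _)
  rw [hv.sum_smul_sub_smul_sum_eq hA i c k.zero_le, ← Finset.range_eq_Ico, mul_add,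
    Finset.mul_sum (Finset.range k)]
  exact norm_add_le_of_le (hdecay k le_rfl _)
    (norm_sum_le_of_le _ fun t _ => hdecay (k - 1 - t) (by lia) _)

end IsPerturbedMixing

/-- The family on `N` nodes that is `f` on the `n` players and vanishes on the virtual nodes, the
players being the first `n` nodes. -/
def padZero {n : ℕ} {E : Type*} [Zero E] (N : ℕ) (f : Fin n → E) : Fin N → E :=
  fun j => if h : (j : ℕ) < n then f ⟨j, h⟩ else 0

section PadZero

variable {n N : ℕ} {E F : Type*} [Zero E]

theorem eq_padZero (hnN : n ≤ N) {u : Fin N → E} {f : Fin n → E}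
    (hplayer : ∀ i, u (Fin.castLE hnN i) = f i) (hvirtual : ∀ j : Fin N, n ≤ (j : ℕ) → u j = 0) :
    u = padZero N f := by
  funext j
  unfold padZero
  split_ifs with hj
  · exact hplayer ⟨j, hj⟩
  · exact hvirtual j (not_lt.mp hj)

theorem sum_map_padZero [AddCommMonoid F] (hnN : n ≤ N) {g : E → F} (hg : g 0 = 0)
    (f : Fin n → E) : ∑ j, g (padZero N f j) = ∑ i, g (f i) := by
  obtain ⟨d, rfl⟩ := Nat.exists_eq_add_of_le hnN
  simp [Fin.sum_univ_add, padZero, hg]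

end PadZero

theorem norm_inv_smul_sub_le {E : Type*} [SeminormedAddCommGroup E] [NormedSpace ℝ E]
    {q s : E} {a b η δ ε M : ℝ} (hη : 0 < η) (ha : η ≤ a) (hq : ‖q - b • s‖ ≤ δ)
    (hab : |a - b| ≤ ε) (hs : ‖s‖ ≤ M) : ‖a⁻¹ • q - s‖ ≤ (δ + ε * M) / η := by
  have ha₀ : 0 < a := hη.trans_le ha
  have hsplit : a⁻¹ • q - s = a⁻¹ • ((q - b • s) - (a - b) • s) := by
    rw [sub_smul, sub_sub_sub_cancel_right, smul_sub, inv_smul_smul₀ ha₀.ne']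
  have hnum : ‖(q - b • s) - (a - b) • s‖ ≤ δ + ε * M :=
    norm_sub_le_of_le hq <| (norm_smul_le _ _).trans <|
      mul_le_mul hab hs (norm_nonneg _) ((abs_nonneg _).trans hab)
  rw [hsplit, norm_smul, norm_inv, Real.norm_of_nonneg ha₀.le, inv_mul_eq_div]
  exact div_le_div₀ ((norm_nonneg _).trans hnum) hnum hη ha

section PushSum

variable {n N : ℕ} {E : Type*} [SeminormedAddCommGroup E] [NormedSpace ℝ E]
  {A : ℕ → Matrix (Fin N) (Fin N) ℝ} {v : ℕ → Fin N → E} {y : ℕ → Fin N → ℝ} {x : ℕ → Fin n → E}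

theorem abs_pushsum_weight_sub_le (hnN : n ≤ N) (hA : ∀ k j, ∑ i, A k i j = 1)
    (hy : IsPerturbedMixing A y 0) (hy₀ : y 0 = padZero N (1 : Fin n → ℝ)) {i : Fin N} {k : ℕ}
    {c B r : ℝ} (herg : ∀ t ≤ k, ∀ j, |backProd A k t i j - c| ≤ B * r ^ t) :
    |y (k + 1) i - c * n| ≤ B * (r ^ k * n) := by
  have hmass : ∑ j, y k j = n :=
    hy.sum_eq hA (S := fun _ => (n : ℝ))
      (by simpa [hy₀] using sum_map_padZero hnN (g := id) rfl (1 : Fin n → ℝ)) (by simp) k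
  have hmass₀ : ∑ j, ‖y 0 j‖ = n := by
    simpa [hy₀] using sum_map_padZero hnN norm_zero (1 : Fin n → ℝ)
  have hstep : y (k + 1) i = ∑ m, A k i m • y k m := by simpa using hy k i
  have hdeviation := hy.norm_sum_smul_sub_smul_sum_le hA herg
  rw [← hstep, hmass, hmass₀] at hdeviation
  simpa using hdeviation

theorem norm_pushsum_numerator_sub_le (hnN : n ≤ N) (hA : ∀ k j, ∑ i, A k i j = 1)
    (hv : IsPerturbedMixing A v fun k => padZero N (x (k + 1) - x k)) (hv₀ : v 0 = padZero N (x 0))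
    {i : Fin N} {k : ℕ} {c B r : ℝ}
    (herg : ∀ t ≤ k, ∀ j, |backProd A k t i j - c| ≤ B * r ^ t) :
    ‖∑ m, A k i m • v k m - c • ∑ j, x k j‖ ≤
      B * (r ^ k * ∑ j, ‖x 0 j‖ +
        ∑ t ∈ Finset.range k, r ^ (k - 1 - t) * ∑ j, ‖x (t + 1) j - x t j‖) := by
  have hmass : ∑ m, v k m = ∑ j, x k j :=
    hv.sum_eq hA (S := fun k => ∑ j, x k j) (hv₀ ▸ sum_map_padZero hnN (g := id) rfl (x 0))
      (fun t => (sum_map_padZero hnN (g := id) rfl _).trans (by simp)) k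
  simpa only [hmass, hv₀, sum_map_padZero hnN norm_zero, Pi.sub_apply] using
    hv.norm_sum_smul_sub_smul_sum_le hA herg

theorem norm_pushsum_ratio_sub_average_le (hn : n ≠ 0) (hnN : n ≤ N)
    (hA : ∀ k j, ∑ i, A k i j = 1)
    (hv : IsPerturbedMixing A v fun k => padZero N (x (k + 1) - x k)) (hv₀ : v 0 = padZero N (x 0))
    (hy : IsPerturbedMixing A y 0) (hy₀ : y 0 = padZero N (1 : Fin n → ℝ))
    {i : Fin N} {k : ℕ} {c B r η M : ℝ} (hB : 0 ≤ B) (hr : 0 ≤ r)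
    (herg : ∀ t ≤ k, ∀ j, |backProd A k t i j - c| ≤ B * r ^ t)
    (hη : 0 < η) (hηy : η ≤ y (k + 1) i) (hx : ∀ t j, ‖x t j‖ ≤ M) :
    ‖(y (k + 1) i)⁻¹ • ∑ m, A k i m • v k m - (n : ℝ)⁻¹ • ∑ j, x k j‖ ≤
      B / η * (2 * (r ^ k * n * M) +
        ∑ t ∈ Finset.range k, r ^ (k - 1 - t) * ∑ j, ‖x (t + 1) j - x t j‖) := by
  have hn₀ : (0 : ℝ) < n := by positivity
  have hsum (t : ℕ) : ∑ j, ‖x t j‖ ≤ n * M := by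
    simpa using Finset.sum_le_card_nsmul Finset.univ _ M fun j _ => hx t j
  have haverage : ‖(n : ℝ)⁻¹ • ∑ j, x k j‖ ≤ M := by
    rw [norm_smul, norm_inv, Real.norm_of_nonneg hn₀.le, inv_mul_le_iff₀ hn₀]
    exact (norm_sum_le _ _).trans (hsum k)
  have hnumerator : ‖∑ m, A k i m • v k m - (c * n) • (n : ℝ)⁻¹ • ∑ j, x k j‖ ≤
      B * (r ^ k * (n * M) +
        ∑ t ∈ Finset.range k, r ^ (k - 1 - t) * ∑ j, ‖x (t + 1) j - x t j‖) := by
    rw [mul_smul, smul_inv_smul₀ hn₀.ne']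
    refine (norm_pushsum_numerator_sub_le hnN hA hv hv₀ herg).trans ?_
    gcongr
    exact hsum 0
  refine (norm_inv_smul_sub_le hη hηy hnumerator
    (abs_pushsum_weight_sub_le hnN hA hy hy₀ herg) haverage).trans_eq ?_
  ring

end PushSum

theorem sum_range_pow_pred_sub_mul_le {r : ℝ} (hr : 0 < r) {d : ℕ → ℝ} (hd : ∀ t, 0 ≤ d t)
    (k : ℕ) :
    ∑ t ∈ Finset.range k, r ^ (k - 1 - t) * d t ≤
      r⁻¹ * ∑ t ∈ Finset.range (k + 1), r ^ (k - t) * d t := by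
  have hshift : ∑ t ∈ Finset.range k, r ^ (k - 1 - t) * d t =
      r⁻¹ * ∑ t ∈ Finset.range k, r ^ (k - t) * d t := by
    rw [Finset.mul_sum]
    refine Finset.sum_congr rfl fun t ht => ?_
    have hexp : k - t = k - 1 - t + 1 := by have := Finset.mem_range.mp ht; lia
    rw [hexp, pow_succ']
    field_simp
  rw [hshift, Finset.sum_range_succ]
  have hlast : 0 ≤ r ^ (k - k) * d k := mul_nonneg (by positivity) (hd k)
  gcongr
  exact le_add_of_nonneg_right hlast

theorem two_mul_add_sum_pow_le {r : ℝ} (hr : r ∈ Set.Ioc (0 : ℝ) 1) {d : ℕ → ℝ}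
    (hd : ∀ t, 0 ≤ d t) {Q : ℝ} (hQ : 0 ≤ Q) (k : ℕ) :
    2 * Q + ∑ t ∈ Finset.range k, r ^ (k - 1 - t) * d t ≤
      2 / r * (Q + ∑ t ∈ Finset.range (k + 1), r ^ (k - t) * d t) := by
  have hr₀ : 0 < r := hr.1
  have hinv : 1 ≤ r⁻¹ := (one_le_inv₀ hr₀).mpr hr.2
  have hmoves : 0 ≤ ∑ t ∈ Finset.range (k + 1), r ^ (k - t) * d t :=
    Finset.sum_nonneg fun t _ => mul_nonneg (by positivity) (hd t)
  calc
    _ ≤ 2 * (r⁻¹ * Q) + 2 * (r⁻¹ * ∑ t ∈ Finset.range (k + 1), r ^ (k - t) * d t) := by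
      refine add_le_add ?_ ((sum_range_pow_pred_sub_mul_le hr₀ hd k).trans ?_)
      · gcongr
        exact le_mul_of_one_le_left hQ hinv
      · exact le_mul_of_one_le_left (by positivity) one_le_two
    _ = _ := by ring

theorem mem_of_activated_update {ι E : Type*} {X : ι → Set E} {active : ℕ → Set ι} {x : ℕ → ι → E}
    (hx₀ : ∀ i, x 0 i ∈ X i) (hactive : ∀ k, ∀ i ∈ active k, x (k + 1) i ∈ X i)
    (hidle : ∀ k, ∀ i ∉ active k, x (k + 1) i = x k i) (k : ℕ) (i : ι) : x k i ∈ X i := by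
  induction k with
  | zero => exact hx₀ i
  | succ k ih =>
    by_cases hi : i ∈ active k
    · exact hactive k i hi
    · exact hidle k i hi ▸ ih

theorem norm_le_iSup_sSup_norm_image {ι E : Type*} [Finite ι] [SeminormedAddCommGroup E]
    {X : ι → Set E} {i : ι} (hX : Bornology.IsBounded (X i)) {u : E} (hu : u ∈ X i) :
    ‖u‖ ≤ ⨆ j, sSup ((fun a => ‖a‖) '' X j) := by
  obtain ⟨C, hC⟩ := hX.exists_norm_le
  have hbdd : BddAbove ((fun a => ‖a‖) '' X i) := ⟨C, Set.forall_mem_image.mpr hC⟩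
  exact (le_csSup hbdd (Set.mem_image_of_mem _ hu)).trans
    (le_ciSup (Set.finite_range fun j => sSup ((fun a => ‖a‖) '' X j)).bddAbove i)

theorem pushsum_consensus_bound_general {n N : ℕ} {E : Type*} [SeminormedAddCommGroup E]
    [NormedSpace ℝ E] (hnN : n ≤ N) {A : ℕ → Matrix (Fin N) (Fin N) ℝ}
    (hA : ∀ k j, ∑ i, A k i j = 1) {v w : ℕ → Fin N → E} {y : ℕ → Fin N → ℝ}
    {x z : ℕ → Fin n → E} (hv₀ : v 0 = padZero N (x 0)) (hy₀ : y 0 = padZero N (1 : Fin n → ℝ))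
    (hw : ∀ k j, w (k + 1) j = ∑ m, A k j m • v k m)
    (hy : ∀ k j, y (k + 1) j = ∑ m, A k j m * y k m)
    (hz : ∀ k i, z (k + 1) i = (y (k + 1) (Fin.castLE hnN i))⁻¹ • w (k + 1) (Fin.castLE hnN i))
    (hv : ∀ k j, v (k + 1) j = w (k + 1) j + padZero N (x (k + 1) - x k) j)
    {B' lam η : ℝ} (hlam : lam ∈ Set.Ioc (0 : ℝ) 1) (hη : 0 < η) {φ : ℕ → Fin N → ℝ}
    (herg : ∀ k t, t ≤ k → ∀ i j, |backProd A k t i j - φ k i| ≤ B' * lam ^ t)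
    (hylb : ∀ i : Fin n, ∀ k, 1 ≤ k → η ≤ y k (Fin.castLE hnN i))
    {M : ℝ} (hx : ∀ k i, ‖x k i‖ ≤ M) (i : Fin n) (k : ℕ) :
    ‖z (k + 1) i - (n : ℝ)⁻¹ • ∑ j, x k j‖ ≤
      2 * B' / (η * lam) *
        (lam ^ k * n * M +
          ∑ t ∈ Finset.range (k + 1), lam ^ (k - t) * ∑ j, ‖x (t + 1) j - x t j‖) := by
  have hlam₀ : 0 < lam := hlam.1
  have hM : 0 ≤ M := (norm_nonneg _).trans (hx 0 i)
  have hB' : 0 ≤ B' := by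
    simpa using (abs_nonneg _).trans (herg 0 0 le_rfl (Fin.castLE hnN i) (Fin.castLE hnN i))
  have hvmix : IsPerturbedMixing A v fun k => padZero N (x (k + 1) - x k) :=
    fun k j => (hv k j).trans (by rw [hw])
  have hymix : IsPerturbedMixing A y 0 := fun k j => by simp [hy]
  rw [hz, hw]
  calc
    _ ≤ B' / η * (2 * (lam ^ k * n * M) +
          ∑ t ∈ Finset.range k, lam ^ (k - 1 - t) * ∑ j, ‖x (t + 1) j - x t j‖) :=
      norm_pushsum_ratio_sub_average_le i.pos.ne' hnN hA hvmix hv₀ hymix hy₀ hB' hlam₀.le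
        (fun t ht j => herg k t ht _ j) hη (hylb i (k + 1) k.succ_pos) hx
    _ ≤ B' / η * (2 / lam * (lam ^ k * n * M +
          ∑ t ∈ Finset.range (k + 1), lam ^ (k - t) * ∑ j, ‖x (t + 1) j - x t j‖)) := by
      gcongr
      exact two_mul_add_sum_pow_le hlam (fun t => Finset.sum_nonneg fun _ _ => norm_nonneg _)
        (by positivity) k
    _ = _ := by field_simp

/-- Lemma 2(a): under the augmented push-sum dynamics with the ergodicity hypothesis,
for every player `i` and every `k ≥ 0`,
`‖z_i(k+1) − x̄(k)‖ ≤ (2B'/(ηλ)) (λ^k n M + ∑_{t=0}^k λ^{k−t} Δ(t))`,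
where `M = max_i sup_{x ∈ X_i} ‖x‖` and `Δ(t) = ∑_i ‖x_i(t+1) − x_i(t)‖`. -/
theorem pushsum_consensus_bound
    (n N p : ℕ) (hn : 0 < n) (hnN : n ≤ N)
    (X : Fin n → Set (EuclideanSpace ℝ (Fin p)))
    -- nonempty convex compact action sets
    (hXne : ∀ i, (X i).Nonempty)
    (hXconv : ∀ i, Convex ℝ (X i))
    (hXcomp : ∀ i, IsCompact (X i))
    -- the game mappings, L-Lipschitz on ℝ^p × ℝ^p
    (F : Fin n → EuclideanSpace ℝ (Fin p) → EuclideanSpace ℝ (Fin p) →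
      EuclideanSpace ℝ (Fin p))
    (L : ℝ) (hLpos : 0 < L)
    (hFlip : ∀ i xi xi' z z',
      ‖F i xi z - F i xi' z'‖ ≤ L * Real.sqrt (‖xi - xi'‖ ^ 2 + ‖z - z'‖ ^ 2))
    -- nonnegative column-stochastic matrices
    (A : ℕ → Matrix (Fin N) (Fin N) ℝ)
    (hAnn : ∀ k i j, 0 ≤ A k i j)
    (hAcol : ∀ k j, ∑ i, A k i j = 1)
    -- states
    (v w : ℕ → Fin N → EuclideanSpace ℝ (Fin p))
    (y : ℕ → Fin N → ℝ)
    (x z : ℕ → Fin n → EuclideanSpace ℝ (Fin p))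
    -- initialization
    (hx0 : ∀ i, x 0 i ∈ X i)
    (hv0p : ∀ i : Fin n, v 0 (Fin.castLE hnN i) = x 0 i)
    (hy0p : ∀ i : Fin n, y 0 (Fin.castLE hnN i) = 1)
    (hv0v : ∀ j : Fin N, n ≤ (j : ℕ) → v 0 j = 0)
    (hy0v : ∀ j : Fin N, n ≤ (j : ℕ) → y 0 j = 0)
    -- activation sets
    (Aset : ℕ → Finset (Fin n))
    (hAsetne : ∀ k, (Aset k).Nonempty)
    (σ1 : ℕ) (hσ1 : 1 ≤ σ1)
    (hcover : ∀ k, ∀ i : Fin n, ∃ u, k + 1 ≤ u ∧ u ≤ k + σ1 ∧ i ∈ Aset u)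
    -- counters
    (l : Fin n → ℕ → ℕ) (σ2 : ℕ) (hσ2 : 1 ≤ σ2)
    (hl0 : ∀ i, l i 0 = 0)
    (hlact : ∀ i k, i ∈ Aset k → l i k + 1 ≤ l i (k + 1) ∧ l i (k + 1) ≤ l i k + σ2)
    (hlstay : ∀ i k, i ∉ Aset k → l i (k + 1) = l i k)
    -- stepsize generating sequence
    (ρ : ℕ → ℝ)
    (hρpos : ∀ t, 0 < ρ t)
    (hρmono : ∀ t, ρ (t + 1) ≤ ρ t)
    (hρsq : Summable fun t => ρ t ^ 2)
    (α : Fin n → ℕ → ℝ)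
    (hα : ∀ i k, α i k = ∑ t ∈ Finset.Ico (l i k) (l i (k + 1)), ρ t)
    -- push-sum dynamics
    (hw : ∀ k, ∀ j : Fin N, w (k + 1) j = ∑ m, A k j m • v k m)
    (hy : ∀ k, ∀ j : Fin N, y (k + 1) j = ∑ m, A k j m * y k m)
    (hz : ∀ k, ∀ i : Fin n,
      z (k + 1) i = (y (k + 1) (Fin.castLE hnN i))⁻¹ • w (k + 1) (Fin.castLE hnN i))
    -- the projected pseudo-gradient update for active players
    (hxup : ∀ k, ∀ i : Fin n, i ∈ Aset k →
      x (k + 1) i ∈ X i ∧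
      ∀ u ∈ X i,
        ‖x k i - α i k • F i (x k i) (z (k + 1) i) - x (k + 1) i‖ ≤
        ‖x k i - α i k • F i (x k i) (z (k + 1) i) - u‖)
    (hxstay : ∀ k, ∀ i : Fin n, i ∉ Aset k → x (k + 1) i = x k i)
    (hv : ∀ k, ∀ j : Fin N, v (k + 1) j =
      w (k + 1) j + (if h : (j : ℕ) < n then x (k + 1) ⟨j, h⟩ - x k ⟨j, h⟩ else 0))
    -- ergodicity hypothesis
    (B' lam η : ℝ) (hB' : 0 < B') (hlam : lam ∈ Set.Ioo (0 : ℝ) 1)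
    (hη : η ∈ Set.Ioc (0 : ℝ) 1)
    (φvec : ℕ → Fin N → ℝ)
    (hφnn : ∀ k i, 0 ≤ φvec k i)
    (hφsum : ∀ k, ∑ i, φvec k i = 1)
    (herg : ∀ k t, t ≤ k → ∀ i j : Fin N, |backProd A k t i j - φvec k i| ≤ B' * lam ^ t)
    (hylb : ∀ i : Fin n, ∀ k, 1 ≤ k → η ≤ y k (Fin.castLE hnN i))
    (M : ℝ) (hM : M = ⨆ i : Fin n, sSup ((fun u => ‖u‖) '' X i)) :
    ∀ i : Fin n, ∀ k : ℕ,
      ‖z (k + 1) i - (n : ℝ)⁻¹ • ∑ j, x k j‖ ≤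
        2 * B' / (η * lam) *
          (lam ^ k * n * M +
            ∑ t ∈ Finset.range (k + 1), lam ^ (k - t) * ∑ j, ‖x (t + 1) j - x t j‖) :=
  pushsum_consensus_bound_general hnN hAcol (eq_padZero hnN hv0p hv0v) (eq_padZero hnN hy0p hy0v)
    hw hy hz hv ⟨hlam.1, hlam.2.le⟩ hη.1 herg hylb fun k i => hM ▸
      norm_le_iSup_sSup_norm_image (hXcomp i).isBounded
        (mem_of_activated_update (active := fun k => Aset k) hx0 (fun k i hi => (hxup k i hi).1)
          hxstay k i)
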